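/- Suppose t > 0 and (x,q) satisfies one of: (d) 0 ≤ x < Bt and x − Bt < q < (√(Bt) − √x)²; (e) −Bt < x ≤ 0 and −(√(Bt) − √|x|)² < q < x + Bt. Then I(x,t,q) = (B/2)(|x| + |q|) − (x − q)/2 + t·c/4, and the infimum is attained by a path that travels linearly from q to 0 during [0, |q|/B], stays at 0 during [|q|/B, t − |x|/B], and travels linearly from 0 to x during [t − |x|/B, t]. -/

import Mathlib

/-!
The Legendre duality `g₀(v) ≥ ρ(1-ρ) - vρ` for `0 ≤ ρ ≤ 1` turns every choice of a constant `ρ` into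
a lower bound for the cost of a path on a time interval, in terms of the length of the interval and
the displacement only (`cost_lower`).

A path from `q` to `x` that never vanishes exists only if `x` and `q` have the same sign; it sees the
rate `1` throughout, and the choice `ρ = (1 - (x-q)/t)/2` bounds its cost below by
`t (1 - (x-q)/t)²/4`. The condition `|q| < (√(Bt) - √|x|)²` guarantees that this is at
least the claimed value. A path that vanishes is cut at its first and last zeros. Before the first
and after the last one the rate is `1`, and `ρ = (1 ± B)/2`, for which `ρ(1-ρ) = c/4`, gives the two
terms `B|q|/2` and `B|x|/2`. In between, `ρ = 1/2` gives the rate of cost `c/4` whether or not the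
path sits at `0`, because `λ ≥ c`. Summing gives the claimed value, and the explicit path
(speed `B` to the origin, rest, speed `B` away from it) has that cost.
-/

open Filter Set MeasureTheory intervalIntegral

/-- The Legendre conjugate `g₀` of the TASEP flux `f₀(ρ) = ρ(1−ρ)`:
`g₀(x) = −x` for `x ≤ −1`, `(1−x)²/4` for `−1 ≤ x ≤ 1`, and `0` for `x ≥ 1`. -/
noncomputable def g0 (x : ℝ) : ℝ :=
  if x ≤ -1 then -x else if x ≤ 1 then (1 - x) ^ 2 / 4 else 0

/-- The macroscopic rate profile: `λ(x) = 1` for `x ≠ 0` and `λ(0) = c`. -/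
noncomputable def lam (c : ℝ) (x : ℝ) : ℝ := if x = 0 then c else 1

/-- `w` is piecewise `C¹` on `[a,b]`: continuous on `[a,b]` and `C¹` on each cell of
some finite partition `a = p 0 < p 1 < ⋯ < p k = b`. -/
def PiecewiseC1On (w : ℝ → ℝ) (a b : ℝ) : Prop :=
  ContinuousOn w (Set.Icc a b) ∧
    ∃ (k : ℕ) (p : ℕ → ℝ), p 0 = a ∧ p k = b ∧ (∀ i < k, p i < p (i + 1)) ∧
      ∀ i < k, ContDiffOn ℝ 1 w (Set.Icc (p i) (p (i + 1)))

/-- The running cost `∫₀ᵗ λ(w(s)) g₀(w′(s)/λ(w(s))) ds` of a path `w : [0,t] → ℝ`. -/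
noncomputable def pathCost (c t : ℝ) (w : ℝ → ℝ) : ℝ :=
  ∫ s in (0 : ℝ)..t, lam c (w s) * g0 (deriv w s / lam c (w s))

/-- The variational (Hopf–Lax type) solution
`v(x,t) = sup { v₀(w(0)) − ∫₀ᵗ λ(w(s)) g₀(w′(s)/λ(w(s))) ds : w piecewise C¹, w(t) = x }`. -/
noncomputable def vVar (c : ℝ) (v0 : ℝ → ℝ) (x t : ℝ) : ℝ :=
  sSup { a | ∃ w : ℝ → ℝ, PiecewiseC1On w 0 t ∧ w t = x ∧ a = v0 (w 0) - pathCost c t w }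

/-- The optimal control cost
`I(x,t,q) = inf { ∫₀ᵗ λ(w(s)) g₀(w′(s)/λ(w(s))) ds : w piecewise C¹, w(0) = q, w(t) = x }`. -/
noncomputable def Icost (c : ℝ) (x t q : ℝ) : ℝ :=
  sInf { a | ∃ w : ℝ → ℝ, PiecewiseC1On w 0 t ∧ w 0 = q ∧ w t = x ∧ a = pathCost c t w }

/-- The integrand of `pathCost`: the running cost of the path `w` at time `s`. -/
noncomputable def costRate (c : ℝ) (w : ℝ → ℝ) (s : ℝ) : ℝ :=
  lam c (w s) * g0 (deriv w s / lam c (w s))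

/-! ### The running cost -/

lemma g0_ge {ρ : ℝ} (h0 : 0 ≤ ρ) (h1 : ρ ≤ 1) (v : ℝ) : ρ * (1 - ρ) - v * ρ ≤ g0 v := by
  unfold g0
  split_ifs with h2 h3
  · nlinarith [mul_nonneg (sub_nonneg.2 h1) (by linarith : 0 ≤ -v - ρ)]
  · nlinarith [sq_nonneg (ρ - (1 - v) / 2)]
  · nlinarith [mul_nonneg h0 (by linarith : 0 ≤ v - 1 + ρ)]

lemma g0_nonneg (v : ℝ) : 0 ≤ g0 v := by
  simpa using g0_ge le_rfl zero_le_one v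

lemma g0_le (v : ℝ) : g0 v ≤ 1 + |v| := by
  unfold g0
  split_ifs with h2 h3
  · linarith [neg_abs_le v]
  · nlinarith [abs_nonneg v]
  · positivity

lemma g0_of_abs_le {v : ℝ} (hv : |v| ≤ 1) : g0 v = (1 - v) ^ 2 / 4 := by
  obtain ⟨h1, h2⟩ := abs_le.1 hv
  unfold g0
  split_ifs with h3
  · obtain rfl : v = -1 := le_antisymm h3 h1
    norm_num
  · rfl

lemma measurable_g0 : Measurable g0 := by
  unfold g0
  exact Measurable.ite measurableSet_Iic measurable_neg
    (Measurable.ite measurableSet_Iic (by fun_prop) measurable_const)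

lemma measurable_lam (c : ℝ) : Measurable (lam c) :=
  Measurable.ite (measurableSet_singleton 0) measurable_const measurable_const

lemma lam_pos {c : ℝ} (hc : 0 < c) (x : ℝ) : 0 < lam c x := by
  unfold lam; split_ifs <;> linarith

lemma le_lam {c : ℝ} (hc : c ≤ 1) (x : ℝ) : c ≤ lam c x := by
  unfold lam; split_ifs <;> linarith

lemma lam_le_one {c : ℝ} (hc : c ≤ 1) (x : ℝ) : lam c x ≤ 1 := by
  unfold lam; split_ifs <;> linarith

lemma costRate_ge {c : ℝ} (hc : 0 < c) {ρ : ℝ} (h0 : 0 ≤ ρ) (h1 : ρ ≤ 1) (w : ℝ → ℝ) (s : ℝ) :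
    lam c (w s) * (ρ * (1 - ρ)) - ρ * deriv w s ≤ costRate c w s := by
  have hl := lam_pos hc (w s)
  have h := mul_le_mul_of_nonneg_left (g0_ge h0 h1 (deriv w s / lam c (w s))) hl.le
  refine le_trans (le_of_eq ?_) h
  field_simp

/-! ### Piecewise C¹ paths -/

lemma exists_cell (p : ℕ → ℝ) (k : ℕ) :
    ∀ s ∈ Ico (p 0) (p k), ∃ i < k, s ∈ Ico (p i) (p (i + 1)) := by
  induction k with
  | zero => intro s hs; simp at hs
  | succ n ih =>
    intro s hs
    rcases lt_or_ge s (p n) with h | h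
    · obtain ⟨i, hi, his⟩ := ih s ⟨hs.1, h⟩
      exact ⟨i, by omega, his⟩
    · exact ⟨n, by omega, h, hs.2⟩

lemma PiecewiseC1On.differentiable_off {w : ℝ → ℝ} {a b : ℝ} (h : PiecewiseC1On w a b) :
    ∃ S : Set ℝ, S.Countable ∧ ∀ s ∈ Ioo a b \ S, DifferentiableAt ℝ w s := by
  obtain ⟨-, k, p, rfl, rfl, -, hC⟩ := h
  refine ⟨range p, countable_range p, ?_⟩
  rintro s ⟨hs, hsp⟩
  obtain ⟨i, hi, h1, h2⟩ := exists_cell p k s ⟨hs.1.le, hs.2⟩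
  have h3 : p i < s := lt_of_le_of_ne h1 (fun h => hsp ⟨i, h⟩)
  exact ((hC i hi).differentiableOn one_ne_zero).differentiableAt (Icc_mem_nhds h3 h2)

lemma PiecewiseC1On.intervalIntegrable_deriv {w : ℝ → ℝ} {a b : ℝ} (h : PiecewiseC1On w a b) :
    IntervalIntegrable (deriv w) volume a b := by
  obtain ⟨-, k, p, rfl, rfl, hp, hC⟩ := h
  refine IntervalIntegrable.trans_iterate fun i hi => ?_
  have hlt := hp i hi
  -- the derivative within the closed cell is continuous, and agrees with `deriv w` in the interior
  have hcont : ContinuousOn (derivWithin w (Icc (p i) (p (i + 1)))) (Icc (p i) (p (i + 1))) :=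
    (hC i hi).continuousOn_derivWithin (uniqueDiffOn_Icc hlt) le_rfl
  refine (ContinuousOn.intervalIntegrable_of_Icc hlt.le hcont).congr_uIoo ?_
  intro s hs
  rw [uIoo_of_le hlt.le] at hs
  exact derivWithin_of_mem_nhds (Icc_mem_nhds hs.1 hs.2)

lemma PiecewiseC1On.intervalIntegrable_costRate {w : ℝ → ℝ} {a b c : ℝ}
    (h : PiecewiseC1On w a b) (hab : a ≤ b) (hc : 0 < c) (hc1 : c ≤ 1) :
    IntervalIntegrable (costRate c w) volume a b := by
  have hd := h.intervalIntegrable_deriv.abs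
  have hg := (intervalIntegrable_const (μ := volume) (a := a) (b := b) (c := (1 : ℝ))).add hd
  refine hg.mono_fun ?_ ?_
  · rw [uIoc_of_le hab]
    have hw : AEMeasurable w (volume.restrict (Ioc a b)) :=
      (h.1.mono Ioc_subset_Icc_self).aemeasurable measurableSet_Ioc
    have hl : AEMeasurable (fun s => lam c (w s)) (volume.restrict (Ioc a b)) :=
      (measurable_lam c).comp_aemeasurable hw
    exact (hl.mul (measurable_g0.comp_aemeasurable
      ((measurable_deriv w).aemeasurable.div hl))).aestronglyMeasurable
  · refine Eventually.of_forall fun s => ?_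
    have hl := lam_pos hc (w s)
    have hl1 := lam_le_one hc1 (w s)
    have h1 : costRate c w s ≤ lam c (w s) + |deriv w s| := by
      have := mul_le_mul_of_nonneg_left (g0_le (deriv w s / lam c (w s))) hl.le
      refine this.trans (le_of_eq ?_)
      rw [abs_div, abs_of_pos hl]
      field_simp
    have h0 : 0 ≤ costRate c w s := mul_nonneg hl.le (g0_nonneg _)
    have h2 : 0 ≤ 1 + |deriv w s| := by positivity
    simp only [Real.norm_eq_abs]
    rw [abs_of_nonneg h0, abs_of_nonneg h2]
    linarith

/-- A piecewise C¹ path may be prolonged by a C¹ piece, possibly over a degenerate interval. -/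
lemma PiecewiseC1On.snoc {w : ℝ → ℝ} {a b d : ℝ} (h : PiecewiseC1On w a b) (hab : a ≤ b)
    (hbd : b ≤ d) (hC : ContDiffOn ℝ 1 w (Icc b d)) : PiecewiseC1On w a d := by
  rcases hbd.eq_or_lt with rfl | hlt
  · exact h
  obtain ⟨hcont, k, p, rfl, rfl, hp, hCp⟩ := h
  refine ⟨?_, k + 1, fun i => if i ≤ k then p i else d, by simp, by simp, ?_, ?_⟩
  · rw [← Icc_union_Icc_eq_Icc hab hbd]
    exact hcont.union_of_isClosed hC.continuousOn isClosed_Icc isClosed_Icc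
  all_goals
    intro i hi
    rcases Nat.lt_succ_iff_lt_or_eq.1 hi with hi | rfl
  · simpa [hi.le, Nat.succ_le_of_lt hi] using hp i hi
  · simpa using hlt
  · simpa [hi.le, Nat.succ_le_of_lt hi] using hCp i hi
  · simpa using hC

lemma PiecewiseC1On.refl (w : ℝ → ℝ) (a : ℝ) : PiecewiseC1On w a a :=
  ⟨by simp, 0, fun _ => a, rfl, rfl, by simp, by simp⟩

/-! ### Lower bound -/

/-- The calibration inequality: on `[u,v]`, the constant `ρ` bounds the cost from below by a function
of the elapsed time and the displacement. -/
lemma cost_lower {w : ℝ → ℝ} {a b c u v K ρ : ℝ} (h : PiecewiseC1On w a b)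
    (hc : 0 < c) (hc1 : c ≤ 1) (hau : a ≤ u) (huv : u ≤ v) (hvb : v ≤ b)
    (h0 : 0 ≤ ρ) (h1 : ρ ≤ 1) (hK : ∀ s ∈ Ioo u v, K ≤ lam c (w s) * (ρ * (1 - ρ))) :
    K * (v - u) - ρ * (w v - w u) ≤ ∫ s in u..v, costRate c w s := by
  have hab : a ≤ b := hau.trans (huv.trans hvb)
  have hsub : uIcc u v ⊆ uIcc a b := by
    rw [uIcc_of_le huv, uIcc_of_le hab]; exact Icc_subset_Icc hau hvb
  have hd : IntervalIntegrable (deriv w) volume u v := h.intervalIntegrable_deriv.mono_set hsub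
  have hL := (h.intervalIntegrable_costRate hab hc hc1).mono_set hsub
  obtain ⟨S, hS, hdiff⟩ := h.differentiable_off
  have hftc : ∫ s in u..v, deriv w s = w v - w u :=
    integral_eq_of_hasDerivAt_off_countable_of_le w (deriv w) huv hS
      (h.1.mono (Icc_subset_Icc hau hvb))
      (fun s hs => (hdiff s ⟨Ioo_subset_Ioo hau hvb hs.1, hs.2⟩).hasDerivAt) hd
  have hint : ∫ s in u..v, (K - ρ * deriv w s) = K * (v - u) - ρ * (w v - w u) := by
    rw [intervalIntegral.integral_sub intervalIntegrable_const (hd.const_mul ρ),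
      intervalIntegral.integral_const_mul, hftc, intervalIntegral.integral_const, smul_eq_mul,
      mul_comm]
  rw [← hint]
  refine intervalIntegral.integral_mono_on_of_le_Ioo huv
    (intervalIntegrable_const.sub (hd.const_mul ρ)) hL fun s hs => ?_
  linarith [hK s hs, costRate_ge hc h0 h1 w s]

/-- Lower bound for paths that visit the origin. -/
lemma cost_lower_of_zero {w : ℝ → ℝ} {t c B : ℝ} (h : PiecewiseC1On w 0 t)
    (hc : 0 < c) (hc1 : c ≤ 1) (hB0 : 0 ≤ B) (hB : B ^ 2 = 1 - c)
    (hz : ∃ s ∈ Icc 0 t, w s = 0) :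
    B / 2 * (|w t| + |w 0|) - (w t - w 0) / 2 + t * c / 4 ≤ pathCost c t w := by
  have hcpt : IsCompact (Icc 0 t ∩ w ⁻¹' {0}) :=
    isCompact_Icc.of_isClosed_subset (h.1.preimage_isClosed_of_isClosed isClosed_Icc
      isClosed_singleton) inter_subset_left
  have hne : (Icc 0 t ∩ w ⁻¹' {0}).Nonempty := hz
  obtain ⟨u, ⟨hu, hwu⟩, hleast⟩ := hcpt.exists_isLeast hne
  obtain ⟨v, ⟨hv, hwv⟩, hgreat⟩ := hcpt.exists_isGreatest hne
  simp only [mem_preimage, mem_singleton_iff] at hwu hwv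
  have huv : u ≤ v := hleast ⟨hv, hwv⟩
  have ht : (0 : ℝ) ≤ t := hu.1.trans hu.2
  have hB1 : B ≤ 1 := by nlinarith
  have hpre : ∀ s ∈ Ioo 0 u, lam c (w s) = 1 := fun s hs =>
    if_neg fun hs0 => absurd (hleast ⟨⟨hs.1.le, hs.2.le.trans hu.2⟩, hs0⟩) (not_le.2 hs.2)
  have hpost : ∀ s ∈ Ioo v t, lam c (w s) = 1 := fun s hs =>
    if_neg fun hs0 => absurd (hgreat ⟨⟨hv.1.trans hs.1.le, hs.2.le⟩, hs0⟩) (not_le.2 hs.1)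
  have e1 := cost_lower (K := c / 4) (ρ := (1 + B) / 2) h hc hc1 le_rfl hu.1 hu.2
    (by linarith) (by linarith) (fun s hs => by rw [hpre s hs]; nlinarith)
  have e2 := cost_lower (K := c / 4) (ρ := (1 - B) / 2) h hc hc1 le_rfl hu.1 hu.2
    (by linarith) (by linarith) (fun s hs => by rw [hpre s hs]; nlinarith)
  have e3 := cost_lower (K := c / 4) (ρ := 1 / 2) h hc hc1 hu.1 huv hv.2
    (by norm_num) (by norm_num) (fun s hs => by linarith [le_lam hc1 (w s)])
  have e4 := cost_lower (K := c / 4) (ρ := (1 + B) / 2) h hc hc1 hv.1 hv.2 le_rfl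
    (by linarith) (by linarith) (fun s hs => by rw [hpost s hs]; nlinarith)
  have e5 := cost_lower (K := c / 4) (ρ := (1 - B) / 2) h hc hc1 hv.1 hv.2 le_rfl
    (by linarith) (by linarith) (fun s hs => by rw [hpost s hs]; nlinarith)
  have hI := h.intervalIntegrable_costRate ht hc hc1
  have hsub : ∀ {a b : ℝ}, 0 ≤ a → a ≤ b → b ≤ t →
      IntervalIntegrable (costRate c w) volume a b := fun {a b} h0 hab hbt =>
    hI.mono_set (by rw [uIcc_of_le hab, uIcc_of_le ht]; exact Icc_subset_Icc h0 hbt)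
  have hsplit : pathCost c t w = (∫ s in (0 : ℝ)..u, costRate c w s)
      + (∫ s in u..v, costRate c w s) + ∫ s in v..t, costRate c w s := by
    rw [integral_add_adjacent_intervals (hsub le_rfl hu.1 hu.2) (hsub hu.1 huv hv.2),
      integral_add_adjacent_intervals (hsub le_rfl hv.1 hv.2) (hsub hv.1 hv.2 le_rfl)]
    rfl
  rw [hsplit]
  rw [hwu] at e1 e2 e3
  rw [hwv] at e3 e4 e5
  rcases abs_cases (w 0) with ⟨h1, -⟩ | ⟨h1, -⟩ <;> rcases abs_cases (w t) with ⟨h2, -⟩ | ⟨h2, -⟩ <;>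
    rw [h1, h2] <;> linarith

/-- Lower bound for paths that avoid the origin: these have the endpoints on the same side of it and
cost at least as much as the straight line. -/
lemma cost_lower_of_ne_zero {w : ℝ → ℝ} {t c : ℝ} (h : PiecewiseC1On w 0 t) (ht : 0 < t)
    (hc : 0 < c) (hc1 : c ≤ 1) (hxq : |w t - w 0| ≤ t) (hz : ∀ s ∈ Icc 0 t, w s ≠ 0) :
    0 < w t * w 0 ∧ t / 4 - (w t - w 0) / 2 + (w t - w 0) ^ 2 / (4 * t) ≤ pathCost c t w := by
  constructor
  · by_contra hneg
    have h00 := hz 0 ⟨le_rfl, ht.le⟩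
    have htt := hz t ⟨ht.le, le_rfl⟩
    have hcont : ContinuousOn w (uIcc 0 t) := by rw [uIcc_of_le ht.le]; exact h.1
    have hmem : (0 : ℝ) ∈ uIcc (w 0) (w t) := by
      rw [mem_uIcc]
      by_contra hcon
      push Not at hcon
      rcases lt_or_gt_of_ne h00 with h1 | h1 <;> rcases lt_or_gt_of_ne htt with h2 | h2
      · exact hneg (mul_pos_of_neg_of_neg h2 h1)
      · linarith [hcon.1 h1.le]
      · linarith [hcon.2 h2.le]
      · exact hneg (mul_pos h2 h1)
    obtain ⟨s, hs, hs0⟩ := intermediate_value_uIcc hcont hmem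
    rw [uIcc_of_le ht.le] at hs
    exact hz s hs hs0
  · obtain ⟨h1, h2⟩ := abs_le.1 hxq
    have hv1 : (w t - w 0) / t ≤ 1 := (div_le_one ht).2 h2
    have hv2 : -1 ≤ (w t - w 0) / t := by rw [le_div_iff₀ ht]; linarith
    -- `ρ` maximises `ρ(1-ρ) - vρ` for the mean velocity `v = (w t - w 0)/t`
    have e := cost_lower (K := (1 - (w t - w 0) / t) / 2 * (1 - (1 - (w t - w 0) / t) / 2))
      (ρ := (1 - (w t - w 0) / t) / 2) h hc hc1 le_rfl ht.le le_rfl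
      (by linarith) (by linarith)
      (fun s hs => by rw [lam, if_neg (hz s ⟨hs.1.le, hs.2.le⟩), one_mul])
    refine le_trans (le_of_eq ?_) e
    field_simp
    ring

/-! ### The explicit path -/

lemma cost_affine {w : ℝ → ℝ} {c u v m d : ℝ} (huv : u ≤ v)
    (hw : ∀ s ∈ Ioo u v, w s = m * s + d) (hne : ∀ s ∈ Ioo u v, w s ≠ 0) :
    ∫ s in u..v, costRate c w s = (v - u) * g0 m := by
  have : (Ioo u v).EqOn (costRate c w) (fun _ => g0 m) := by
    intro s hs
    have hd : deriv w s = m := by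
      have he : w =ᶠ[nhds s] fun s => m * s + d := by
        filter_upwards [isOpen_Ioo.mem_nhds hs] with r hr using hw r hr
      rw [he.deriv_eq]
      simp
    simp [costRate, lam, hne s hs, hd]
  rw [integral_congr_Ioo_of_le huv this, intervalIntegral.integral_const, smul_eq_mul]

lemma cost_rest {w : ℝ → ℝ} {c u v : ℝ} (huv : u ≤ v) (hw : ∀ s ∈ Ioo u v, w s = 0) :
    ∫ s in u..v, costRate c w s = (v - u) * (c / 4) := by
  have : (Ioo u v).EqOn (costRate c w) (fun _ => c / 4) := by
    intro s hs
    have hd : deriv w s = 0 := by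
      have he : w =ᶠ[nhds s] fun _ => 0 := by
        filter_upwards [isOpen_Ioo.mem_nhds hs] with r hr using hw r hr
      rw [he.deriv_eq]
      simp
    have h0 : g0 0 = 1 / 4 := by norm_num [g0]
    simp [costRate, lam, hw s hs, hd, h0]
    ring
  rw [integral_congr_Ioo_of_le huv this, intervalIntegral.integral_const, smul_eq_mul]

/-- The path that moves at speed `B` from `q` to the origin, rests there, and leaves it at speed `B`
so as to reach `x` at time `t`. -/
noncomputable def restPath (B x q t : ℝ) : ℝ → ℝ := fun s =>
  if s ≤ |q| / B then q - s * q / (|q| / B)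
  else if s ≤ t - |x| / B then 0
  else (s - (t - |x| / B)) * x / (|x| / B)

section restPath

variable {B x q t : ℝ}

lemma restPath_zero (hB : 0 < B) : restPath B x q t 0 = q := by
  have : 0 ≤ |q| / B := by positivity
  simp [restPath, this]

lemma restPath_first {s : ℝ} (hs : s ≤ |q| / B) :
    restPath B x q t s = -(q / (|q| / B)) * s + q := by
  rw [restPath, if_pos hs]; ring

lemma restPath_mid (hB : 0 < B) {s : ℝ} (h1 : |q| / B ≤ s) (h2 : s ≤ t - |x| / B) :
    restPath B x q t s = 0 := by
  rcases h1.eq_or_lt with rfl | h1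
  · rw [restPath, if_pos le_rfl]
    rcases eq_or_ne q 0 with rfl | hq
    · simp
    · have := abs_pos.2 hq
      field_simp
      ring
  · rw [restPath, if_neg (not_le.2 h1), if_pos h2]

lemma restPath_last (hB : 0 < B) (hbl : |q| / B ≤ t - |x| / B) {s : ℝ} (hs : t - |x| / B ≤ s) :
    restPath B x q t s = x / (|x| / B) * s + -(t - |x| / B) * (x / (|x| / B)) := by
  rcases hs.eq_or_lt with rfl | hs
  · rw [restPath_mid hB hbl le_rfl]; ring
  · rw [restPath, if_neg (not_le.2 (hbl.trans_lt hs)), if_neg (not_le.2 hs)]; ring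

lemma restPath_end (hB : 0 < B) (hbl : |q| / B ≤ t - |x| / B) : restPath B x q t t = x := by
  have h0 : 0 ≤ |x| / B := by positivity
  rw [restPath_last hB hbl (by linarith)]
  rcases eq_or_ne x 0 with rfl | hx
  · simp
  · have := abs_pos.2 hx
    field_simp
    ring

lemma piecewiseC1On_restPath (hB : 0 < B) (hbl : |q| / B ≤ t - |x| / B) :
    PiecewiseC1On (restPath B x q t) 0 t := by
  have hq0 : 0 ≤ |q| / B := by positivity
  have hx0 : 0 ≤ |x| / B := by positivity
  refine (((PiecewiseC1On.refl _ 0).snoc le_rfl hq0 ?_).snoc hq0 hbl ?_).snoc (hq0.trans hbl)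
    (by linarith) ?_
  · refine ContDiffOn.congr (f := fun s => -(q / (|q| / B)) * s + q) (by fun_prop) ?_
    exact fun s hs => restPath_first hs.2
  · refine ContDiffOn.congr (f := fun _ => (0 : ℝ)) (by fun_prop) ?_
    exact fun s hs => restPath_mid hB hs.1 hs.2
  · refine ContDiffOn.congr
      (f := fun s => x / (|x| / B) * s + -(t - |x| / B) * (x / (|x| / B))) (by fun_prop) ?_
    exact fun s hs => restPath_last hB hbl hs.1

/-- Cost of the displacement `-y` at speed `B = √(1 - c)` where the rate is `1`, which takes the time
`|y|/B`: besides `c/4` per unit of time, it is `B/2` per unit of distance minus half of the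
displacement. -/
lemma speed_cost {c : ℝ} (hB : 0 < B) (hB1 : B ≤ 1) (hBc : B ^ 2 = 1 - c) {y : ℝ} :
    |y| / B * g0 (-(y / (|y| / B))) = c / 4 * (|y| / B) + B * |y| / 2 + y / 2 := by
  obtain rfl : c = 1 - B ^ 2 := by linarith
  rcases lt_trichotomy y 0 with hy | rfl | hy
  · have h1 : -(y / (|y| / B)) = B := by
      have := hy.ne
      rw [abs_of_neg hy]; field_simp
    rw [h1, g0_of_abs_le (by rwa [abs_of_pos hB]), abs_of_neg hy]
    field_simp; ring
  · simp
  · have h1 : -(y / (|y| / B)) = -B := by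
      rw [abs_of_pos hy]; field_simp
    rw [h1, g0_of_abs_le (by rwa [abs_neg, abs_of_pos hB]), abs_of_pos hy]
    field_simp; ring

lemma pathCost_restPath {c : ℝ} (hc : 0 < c) (hc1 : c ≤ 1) (hB : 0 < B) (hB1 : B ≤ 1)
    (hBc : B ^ 2 = 1 - c) (hbl : |q| / B ≤ t - |x| / B) :
    pathCost c t (restPath B x q t) = B / 2 * (|x| + |q|) - (x - q) / 2 + t * c / 4 := by
  have hq0 : 0 ≤ |q| / B := by positivity
  have hx0 : 0 ≤ |x| / B := by positivity
  have hl0 : 0 ≤ t - |x| / B := hq0.trans hbl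
  have hlt : t - |x| / B ≤ t := by linarith
  have ht : 0 ≤ t := by linarith
  have hI := (piecewiseC1On_restPath hB hbl).intervalIntegrable_costRate ht hc hc1
  have hsub : ∀ {a b : ℝ}, 0 ≤ a → a ≤ b → b ≤ t →
      IntervalIntegrable (costRate c (restPath B x q t)) volume a b := fun {a b} h0 hab hbt =>
    hI.mono_set (by rw [uIcc_of_le hab, uIcc_of_le ht]; exact Icc_subset_Icc h0 hbt)
  have hsplit : pathCost c t (restPath B x q t)
      = (∫ s in (0 : ℝ)..(|q| / B), costRate c (restPath B x q t) s)
      + (∫ s in (|q| / B)..(t - |x| / B), costRate c (restPath B x q t) s)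
      + ∫ s in (t - |x| / B)..t, costRate c (restPath B x q t) s := by
    rw [integral_add_adjacent_intervals (hsub le_rfl hq0 (hbl.trans hlt)) (hsub hq0 hbl hlt),
      integral_add_adjacent_intervals (hsub le_rfl hl0 hlt) (hsub hl0 hlt le_rfl)]
    rfl
  rw [hsplit, cost_rest hbl fun s hs => restPath_mid hB hs.1.le hs.2.le,
    cost_affine hq0 (fun s hs => restPath_first hs.2.le) ?_,
    cost_affine hlt (fun s hs => restPath_last hB hbl hs.1.le) ?_]
  · have e1 := speed_cost hB hB1 hBc (y := q)
    have e2 := speed_cost hB hB1 hBc (y := -x)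
    rw [abs_neg, neg_div, neg_neg] at e2
    rw [sub_zero, sub_sub_cancel, e1, e2]
    ring
  · intro s hs h0
    have hx : x ≠ 0 := by
      rintro rfl
      simp at hs
    rw [restPath_last hB hbl hs.1.le] at h0
    have h1 : x / (|x| / B) * (s - (t - |x| / B)) = 0 := by rw [← h0]; ring
    have h2 : x / (|x| / B) ≠ 0 := div_ne_zero hx (div_ne_zero (abs_ne_zero.2 hx) hB.ne')
    rcases mul_eq_zero.1 h1 with h | h
    · exact h2 h
    · linarith [hs.1]
  · intro s hs h0
    have hq : q ≠ 0 := by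
      rintro rfl
      simp at hs
    rw [restPath_first hs.2.le] at h0
    have hpos : 0 < |q| / B := by positivity
    have h1 : q * (|q| / B - s) = 0 := by
      have : q * (|q| / B - s) = (|q| / B) * (-(q / (|q| / B)) * s + q) := by
        generalize |q| / B = T at hpos
        field_simp
        ring
      rw [this, h0, mul_zero]
    rcases mul_eq_zero.1 h1 with h | h
    · exact hq h
    · linarith [hs.2]

end restPath

/-! ### The region of the endpoints -/

/-- `q = (√a - √b)²` is the smaller root of `a² + (b - q)² - 2a(b + q)`. -/
lemma quad_nonneg {a b q : ℝ} (ha : 0 ≤ a) (hb : 0 ≤ b)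
    (h : q ≤ (Real.sqrt a - Real.sqrt b) ^ 2) : 0 ≤ a ^ 2 + (b - q) ^ 2 - 2 * a * (b + q) := by
  have e1 := Real.sq_sqrt ha
  have e2 := Real.sq_sqrt hb
  have hm : 0 ≤ Real.sqrt a * Real.sqrt b := by positivity
  generalize Real.sqrt a = α at *
  generalize Real.sqrt b = β at *
  subst e1 e2
  have h2 : q ≤ (α + β) ^ 2 := by nlinarith
  nlinarith [mul_nonneg (sub_nonneg.2 h) (sub_nonneg.2 h2)]

lemma sqrt_sub_sq_le {a b : ℝ} (hb : 0 ≤ b) (hab : b ≤ a) :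
    (Real.sqrt a - Real.sqrt b) ^ 2 ≤ a - b := by
  have e1 := Real.sq_sqrt (hb.trans hab)
  have e2 := Real.sq_sqrt hb
  nlinarith [Real.sqrt_nonneg b, Real.sqrt_le_sqrt hab]

/-- In both cases of the theorem there is time to reach and leave the origin at speed `B`, and if the
endpoints lie on the same side of the origin, the straight line is not cheaper. -/
lemma region {x q a : ℝ}
    (hcase : (0 ≤ x ∧ x < a ∧ x - a < q ∧ q < (Real.sqrt a - Real.sqrt x) ^ 2) ∨
      (-a < x ∧ x ≤ 0 ∧ -(Real.sqrt a - Real.sqrt |x|) ^ 2 < q ∧ q < x + a)) :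
    |x| + |q| < a ∧ (0 < x * q → 0 ≤ a ^ 2 + (x - q) ^ 2 - 2 * a * (|x| + |q|)) := by
  rcases hcase with ⟨h1, h2, h3, h4⟩ | ⟨h1, h2, h3, h4⟩
  · have h5 := sqrt_sub_sq_le h1 h2.le
    have h6 := quad_nonneg (h1.trans h2.le) h1 h4.le
    rw [abs_of_nonneg h1]
    refine ⟨?_, fun hxq => ?_⟩
    · have : |q| < a - x := abs_lt.2 ⟨by linarith, by linarith⟩
      linarith
    · rw [abs_of_pos (pos_of_mul_pos_right hxq h1)]
      exact h6
  · rw [abs_of_nonpos h2] at h3 ⊢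
    have h5 := sqrt_sub_sq_le (a := a) (b := -x) (by linarith) (by linarith)
    have h6 := quad_nonneg (a := a) (b := -x) (q := -q) (by linarith) (by linarith) (by linarith)
    refine ⟨?_, fun hxq => ?_⟩
    · have : |q| < a + x := abs_lt.2 ⟨by linarith, by linarith⟩
      linarith
    · have hq : q < 0 := by
        by_contra hq
        nlinarith
      rw [abs_of_neg hq]
      linarith

/-- in cases (5.2d)–(5.2e),
`I(x,t,q) = (B/2)(|x|+|q|) − (x−q)/2 + tc/4`, and the infimum is attained by the path
that moves linearly from `q` to `0` on `[0,|q|/B]`, stays at `0` on `[|q|/B, t−|x|/B]`,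
and moves linearly from `0` to `x` on `[t−|x|/B, t]`. -/
theorem Icost_blockage_cases
    (c : ℝ) (hc : c ∈ Set.Ioc (0 : ℝ) 1)
    (B : ℝ) (hB : B = Real.sqrt (1 - c))
    (x q t : ℝ) (ht : 0 < t)
    (hcase :
      (0 ≤ x ∧ x < B * t ∧
        x - B * t < q ∧ q < (Real.sqrt (B * t) - Real.sqrt x) ^ 2) ∨
      (-(B * t) < x ∧ x ≤ 0 ∧
        -(Real.sqrt (B * t) - Real.sqrt |x|) ^ 2 < q ∧ q < x + B * t)) :
    Icost c x t q = B / 2 * (|x| + |q|) - (x - q) / 2 + t * c / 4 ∧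
      pathCost c t
        (fun s =>
          if s ≤ |q| / B then q - s * q / (|q| / B)
          else if s ≤ t - |x| / B then 0
          else (s - (t - |x| / B)) * x / (|x| / B)) =
        B / 2 * (|x| + |q|) - (x - q) / 2 + t * c / 4 := by
  obtain ⟨hc0, hc1⟩ := hc
  have hBc : B ^ 2 = 1 - c := by rw [hB, Real.sq_sqrt (by linarith)]
  have hB0 : 0 ≤ B := hB ▸ Real.sqrt_nonneg _
  have hB1 : B ≤ 1 := by nlinarith
  obtain ⟨hsum, hquad⟩ := region hcase
  have hBpos : 0 < B := by
    rcases hB0.eq_or_lt with h | h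
    · rw [← h, zero_mul] at hsum
      linarith [abs_nonneg x, abs_nonneg q]
    · exact h
  have hbl : |q| / B ≤ t - |x| / B := by
    rw [le_sub_iff_add_le, ← add_div, div_le_iff₀ hBpos]
    linarith
  have hcost := pathCost_restPath hc0 hc1 hBpos hB1 hBc hbl
  refine ⟨?_, hcost⟩
  refine IsLeast.csInf_eq ⟨?_, ?_⟩
  · exact ⟨restPath B x q t, piecewiseC1On_restPath hBpos hbl, restPath_zero hBpos,
      restPath_end hBpos hbl, hcost.symm⟩
  · rintro _ ⟨w, hw, rfl, rfl, rfl⟩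
    by_cases hz : ∃ s ∈ Icc 0 t, w s = 0
    · exact cost_lower_of_zero hw hc0 hc1 hB0 hBc hz
    · push Not at hz
      have hBt : B * t ≤ t := by nlinarith
      have hxq : |w t - w 0| ≤ t := (abs_sub _ _).trans (by linarith)
      obtain ⟨hpos, hle⟩ := cost_lower_of_ne_zero hw ht hc0 hc1 hxq hz
      refine le_trans ?_ hle
      have hgap : t / 4 - (w t - w 0) / 2 + (w t - w 0) ^ 2 / (4 * t) -
          (B / 2 * (|w t| + |w 0|) - (w t - w 0) / 2 + t * c / 4) =
          ((B * t) ^ 2 + (w t - w 0) ^ 2 - 2 * (B * t) * (|w t| + |w 0|)) / (4 * t) := by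
        obtain rfl : c = 1 - B ^ 2 := by linarith
        field_simp
        ring
      have := div_nonneg (hquad hpos) (by positivity : 0 ≤ 4 * t)
      linarith
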